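/- Let X be a uniformly smooth real Banach space and let R : {1,2,…} → ℝ be a sequence with R_1 = 1 such that for every j ≥ 1, R_{j+1} > 1 and R_{j+1} = R_j · ζ⁺_X(1/(R_{j+1} − 1)). Let S be a subset of the closed unit ball of X whose convex hull contains the origin. Then there exists a sequence x_1, x_2, … of points of S such that ‖x_1 + x_2 + ⋯ + x_k‖ ≤ R_k for every k ≥ 1; equivalently, ‖(x_1 + ⋯ + x_k)/k‖ ≤ R_k/k. -/

import Mathlib

open scoped Classical

noncomputable section

/-- `y` is quasi-orthogonal to `x`: some nonzero continuous linear functional attains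
its norm on `x` and vanishes on `y`. -/
def QuasiOrth {X : Type*} [NormedAddCommGroup X] [NormedSpace ℝ X] (y x : X) : Prop :=
  ∃ f : X →L[ℝ] ℝ, f ≠ 0 ∧ f x = ‖f‖ * ‖x‖ ∧ f y = 0

/-- `ζ_X(ε) = inf {‖x + ε y‖ : ‖x‖ = ‖y‖ = 1, y ⌐ x}`. -/
def zetaConv (X : Type*) [NormedAddCommGroup X] [NormedSpace ℝ X] (ε : ℝ) : ℝ :=
  sInf {t : ℝ | ∃ x y : X, ‖x‖ = 1 ∧ ‖y‖ = 1 ∧ QuasiOrth y x ∧ t = ‖x + ε • y‖}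

/-- `ζ⁺_X(ε) = sup {‖x + ε y‖ : ‖x‖ = ‖y‖ = 1, y ⌐ x}`. -/
def zetaSmooth (X : Type*) [NormedAddCommGroup X] [NormedSpace ℝ X] (ε : ℝ) : ℝ :=
  sSup {t : ℝ | ∃ x y : X, ‖x‖ = 1 ∧ ‖y‖ = 1 ∧ QuasiOrth y x ∧ t = ‖x + ε • y‖}

/-- The modulus of convexity `δ_X(ε)`. -/
def modConv (X : Type*) [NormedAddCommGroup X] [NormedSpace ℝ X] (ε : ℝ) : ℝ :=
  sInf {t : ℝ | ∃ x y : X, ‖x‖ ≤ 1 ∧ ‖y‖ ≤ 1 ∧ ε ≤ ‖x - y‖ ∧ t = 1 - ‖x + y‖ / 2}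

/-- The modulus of smoothness `ρ_X(τ)`. -/
def modSmooth (X : Type*) [NormedAddCommGroup X] [NormedSpace ℝ X] (τ : ℝ) : ℝ :=
  sSup {t : ℝ | ∃ x y : X, ‖x‖ = 1 ∧ ‖y‖ = τ ∧ t = (‖x + y‖ + ‖x - y‖) / 2 - 1}

/-- `X` is uniformly convex: the modulus of convexity is positive on `(0, 2]`. -/
def UnifConvex (X : Type*) [NormedAddCommGroup X] [NormedSpace ℝ X] : Prop :=
  ∀ ε ∈ Set.Ioc (0 : ℝ) 2, 0 < modConv X ε

/-- `X` is uniformly smooth: `ρ_X(τ)/τ → 0` as `τ → 0⁺`. -/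
def UnifSmooth (X : Type*) [NormedAddCommGroup X] [NormedSpace ℝ X] : Prop :=
  Filter.Tendsto (fun τ => modSmooth X τ / τ) (nhdsWithin 0 (Set.Ioi 0)) (nhds 0)

/-- A Helly sequence for `X`: `r : {1,2,…} → (0,1]` with `r 1 = 1` and
`r (j+1) * ζ_X (r (j+1)) = r j` for all `j ≥ 1`. -/
def IsHellySeq (X : Type*) [NormedAddCommGroup X] [NormedSpace ℝ X] (r : ℕ → ℝ) : Prop :=
  (∀ j : ℕ, 1 ≤ j → r j ∈ Set.Ioc (0 : ℝ) 1) ∧ r 1 = 1 ∧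
    ∀ j : ℕ, 1 ≤ j → r (j + 1) * zetaConv X (r (j + 1)) = r j

end

theorem aux_quasi {X : Type*} [NormedAddCommGroup X] [NormedSpace ℝ X] (m x : X)
    (hm : m ≠ 0) (h : ∀ t : ℝ, ‖m‖ ≤ ‖m + t • x‖) :
    ∃ g : X →L[ℝ] ℝ, ‖g‖ = 1 ∧ g m = ‖m‖ ∧ g x = 0 := by
  let p : Submodule ℝ X := Submodule.span ℝ {x}
  haveI : IsClosed (p : Set X) := Submodule.closed_of_finiteDimensional p
  obtain ⟨G, hG1, hG2⟩ := exists_dual_vector'' ℝ (p.mkQ m)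
  have hq : ‖m‖ ≤ ‖p.mkQ m‖ := by
    refine le_of_forall_pos_le_add fun e he => ?_
    obtain ⟨w, hw1, hw2⟩ := Submodule.Quotient.norm_mk_lt (S := p) (p.mkQ m) he
    have h3 : w - m ∈ p := (Submodule.Quotient.eq p).1 hw1
    obtain ⟨t, ht⟩ := Submodule.mem_span_singleton.1 h3
    have := h t
    rw [ht, add_sub_cancel] at this
    linarith
  have hle : ∀ z, ‖p.mkQ z‖ ≤ ‖z‖ := fun z => Submodule.Quotient.norm_mk_le p z
  have hz : ∀ z, ‖(G : _ →ₗ[ℝ] ℝ).comp p.mkQ z‖ ≤ 1 * ‖z‖ := fun z => by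
    calc ‖G (p.mkQ z)‖ ≤ ‖G‖ * ‖p.mkQ z‖ := G.le_opNorm _
      _ ≤ 1 * ‖z‖ := mul_le_mul hG1 (hle z) (norm_nonneg _) zero_le_one
  let g : X →L[ℝ] ℝ := LinearMap.mkContinuous _ 1 hz
  have hgn : ‖g‖ ≤ 1 := LinearMap.mkContinuous_norm_le _ zero_le_one hz
  have hgm : g m = ‖m‖ := by
    have : g m = ‖p.mkQ m‖ := hG2
    rw [this]; exact le_antisymm (hle m) hq
  refine ⟨g, le_antisymm hgn ?_, hgm, ?_⟩
  · have := g.le_opNorm m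
    rw [hgm, norm_norm] at this
    have hp : 0 < ‖m‖ := norm_pos_iff.2 hm
    nlinarith
  · have : p.mkQ x = 0 := by
      rw [Submodule.mkQ_apply, Submodule.Quotient.mk_eq_zero]
      exact Submodule.mem_span_singleton_self x
    show G (p.mkQ x) = 0
    rw [this, map_zero]

theorem aux_zeta_le {X : Type*} [NormedAddCommGroup X] [NormedSpace ℝ X] (e : ℝ) (x y : X)
    (hx : ‖x‖ = 1) (hy : ‖y‖ = 1) (h : QuasiOrth y x) : ‖x + e • y‖ ≤ zetaSmooth X e := by
  refine le_csSup ⟨1 + |e|, ?_⟩ ⟨x, y, hx, hy, h, rfl⟩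
  rintro t ⟨x, y, hx, hy, -, rfl⟩
  refine (norm_add_le _ _).trans ?_
  rw [norm_smul, hx, hy, Real.norm_eq_abs, mul_one]

theorem aux_one_le {X : Type*} [NormedAddCommGroup X] [NormedSpace ℝ X] (e : ℝ)
    (h : zetaSmooth X e ≠ 0) : 1 ≤ zetaSmooth X e := by
  have hne : {t : ℝ | ∃ x y : X, ‖x‖ = 1 ∧ ‖y‖ = 1 ∧ QuasiOrth y x ∧
      t = ‖x + e • y‖}.Nonempty := by
    by_contra hn
    rw [Set.not_nonempty_iff_eq_empty] at hn
    apply h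
    rw [zetaSmooth, hn, Real.sSup_empty]
  obtain ⟨t, x, y, hx, hy, hq, rfl⟩ := hne
  refine le_trans ?_ (aux_zeta_le e x y hx hy hq)
  obtain ⟨f, hf0, hfx, hfy⟩ := hq
  have h1 : f (x + e • y) = ‖f‖ := by simp [hfx, hfy, hx]
  have h2 := (le_abs_self _).trans (f.le_opNorm (x + e • y))
  rw [h1] at h2
  have : 0 < ‖f‖ := norm_pos_iff.2 hf0
  nlinarith

theorem aux_birkhoff {X : Type*} [NormedAddCommGroup X] [NormedSpace ℝ X] (m x : X) (T c : ℝ)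
    (hT : 0 < T) (hm : T ≤ ‖m‖) (hx0 : x ≠ 0) (hx : ‖x‖ ≤ 1) (hc0 : 0 ≤ c) (hc1 : c ≤ 1)
    (h : ∀ t : ℝ, ‖m‖ ≤ ‖m + t • x‖) : ‖m + c • x‖ ≤ ‖m‖ * zetaSmooth X (1 / T) := by
  have hmp : 0 < ‖m‖ := hT.trans_le hm
  have hxp : 0 < ‖x‖ := norm_pos_iff.2 hx0
  obtain ⟨g, hg1, hgm, hgx⟩ := aux_quasi m x (norm_pos_iff.1 hmp) h
  set C : ℝ := ‖m‖ * (1 / T) / ‖x‖ with hC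
  have hC1 : 1 ≤ C := by
    rw [hC, le_div_iff₀ hxp, one_mul, mul_one_div]
    exact hx.trans ((one_le_div hT).2 hm)
  have hz := aux_zeta_le (1 / T) (‖m‖⁻¹ • m) (‖x‖⁻¹ • x)
    (by rw [norm_smul, norm_inv, norm_norm, inv_mul_cancel₀ hmp.ne'])
    (by rw [norm_smul, norm_inv, norm_norm, inv_mul_cancel₀ hxp.ne'])
    ⟨g, by rintro rfl; simp at hg1, by
      rw [map_smul, hgm, hg1, norm_smul, norm_inv, norm_norm, smul_eq_mul, one_mul],
      by rw [map_smul, hgx, smul_zero]⟩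
  have hz2 : ‖m + C • x‖ ≤ ‖m‖ * zetaSmooth X (1 / T) := by
    have : m + C • x = ‖m‖ • (‖m‖⁻¹ • m + (1 / T) • (‖x‖⁻¹ • x)) := by
      rw [smul_add, smul_smul, smul_smul, smul_smul, mul_inv_cancel₀ hmp.ne', one_smul, hC,
        div_eq_mul_inv, mul_assoc]
    rw [this, norm_smul, norm_norm]
    exact mul_le_mul_of_nonneg_left hz hmp.le
  refine le_trans ?_ hz2
  have hCp : 0 < C := by linarith
  have hcC : c / C ≤ 1 := (div_le_one hCp).2 (hc1.trans hC1)
  have hcC0 : 0 ≤ c / C := div_nonneg hc0 hCp.le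
  have e : m + c • x = (1 - c / C) • m + (c / C) • (m + C • x) := by
    rw [smul_add, smul_smul, div_mul_cancel₀ _ hCp.ne']; module
  rw [e]
  refine (norm_add_le _ _).trans ?_
  rw [norm_smul, norm_smul, Real.norm_of_nonneg hcC0, Real.norm_of_nonneg (by linarith)]
  nlinarith [h C]

theorem aux_step {X : Type*} [NormedAddCommGroup X] [NormedSpace ℝ X] (r r' : ℝ)
    (hr' : 1 < r') (hrec : r' = r * zetaSmooth X (1 / (r' - 1)))
    (S : Set X) (hS : S ⊆ Metric.closedBall (0 : X) 1)
    (h0 : (0 : X) ∈ convexHull ℝ S) (s : X) (hs : ‖s‖ ≤ r) :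
    ∃ x ∈ S, ‖s + x‖ ≤ r' := by
  obtain ⟨f, hf1, hfs⟩ := exists_dual_vector'' ℝ s
  simp only [RCLike.ofReal_real_eq_id, id] at hfs
  obtain ⟨x, hxS, hfx⟩ : ∃ x ∈ S, f x ≤ 0 := by
    by_contra! hn
    have hc : Convex ℝ {x | 0 < f x} := convex_halfSpace_gt f.isLinear 0
    have := convexHull_min (fun x hx => hn x hx : S ⊆ {x | 0 < f x}) hc h0
    exact absurd (show (0 : ℝ) < f 0 from this) (by rw [map_zero]; exact lt_irrefl 0)
  refine ⟨x, hxS, ?_⟩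
  have hx1 : ‖x‖ ≤ 1 := by simpa using hS hxS
  have hr0 : 0 ≤ r := (norm_nonneg s).trans hs
  have hz1 : 1 ≤ zetaSmooth X (1 / (r' - 1)) := by
    apply aux_one_le
    intro h
    rw [h, mul_zero] at hrec
    linarith
  have hrr : r ≤ r' := by rw [hrec]; exact le_mul_of_one_le_right hr0 hz1
  by_cases hx0 : x = 0
  · rw [hx0, add_zero]; exact hs.trans hrr
  obtain ⟨τ, hτ, hmin⟩ := isCompact_Icc.exists_isMinOn (s := Set.Icc (0 : ℝ) 1)
    (Set.nonempty_Icc.2 zero_le_one)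
    (f := fun t : ℝ => ‖s + t • x‖) (by fun_prop)
  have hmin' : ∀ t ∈ Set.Icc (0 : ℝ) 1, ‖s + τ • x‖ ≤ ‖s + t • x‖ := fun t ht => hmin ht
  have hms : ‖s + τ • x‖ ≤ ‖s‖ := by simpa using hmin' 0 (by simp)
  have hm1 : ‖s + τ • x‖ ≤ ‖s + x‖ := by simpa using hmin' 1 (by simp)
  have hez : s + x = (s + τ • x) + (1 - τ) • x := by module
  rcases eq_or_lt_of_le hτ.2 with h1 | h1
  · rw [h1, one_smul] at hms
    linarith
  rcases le_total ‖s + τ • x‖ (r' - 1) with h2 | h2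
  · rw [hez]
    refine (norm_add_le _ _).trans ?_
    rw [norm_smul, Real.norm_of_nonneg (by linarith)]
    nlinarith [hτ.1, norm_nonneg x]
  rw [hez, hrec]
  refine (aux_birkhoff (s + τ • x) x (r' - 1) (1 - τ) (by linarith) h2 hx0 hx1
    (by linarith) (by linarith [hτ.1]) ?_).trans
    (mul_le_mul_of_nonneg_right (hms.trans hs) (by linarith))
  intro t
  have he : s + τ • x + t • x = s + (τ + t) • x := by module
  rw [he]
  rcases lt_or_ge (τ + t) 0 with h3 | h3
  · refine hms.trans ?_
    have h4 := (le_abs_self _).trans (f.le_opNorm (s + (τ + t) • x))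
    rw [map_add, map_smul, hfs, smul_eq_mul] at h4
    have := norm_nonneg (s + (τ + t) • x)
    nlinarith
  rcases le_or_gt (τ + t) 1 with h4 | h4
  · exact hmin' _ ⟨h3, h4⟩
  by_contra! hlt
  have ht : 0 < t := by linarith
  set l : ℝ := (1 - τ) / t with hl
  have hl0 : 0 < l := div_pos (by linarith) ht
  have hl1 : l ≤ 1 := (div_le_one ht).2 (by linarith)
  have hlt' : l * t = 1 - τ := div_mul_cancel₀ _ ht.ne'
  have e : s + x = (1 - l) • (s + τ • x) + l • (s + (τ + t) • x) := by
    have : (1 - l) • (s + τ • x) + l • (s + (τ + t) • x) = s + (τ + l * t) • x := by module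
    rw [this, hlt']; module
  have h5 : ‖s + x‖ ≤ (1 - l) * ‖s + τ • x‖ + l * ‖s + (τ + t) • x‖ := by
    rw [e]
    refine (norm_add_le _ _).trans ?_
    rw [norm_smul, norm_smul, Real.norm_of_nonneg hl0.le, Real.norm_of_nonneg (by linarith)]
  nlinarith

/-- **No-dimensional Carathéodory theorem in uniformly smooth Banach spaces.** -/
theorem no_dim_caratheodory
    {X : Type*} [NormedAddCommGroup X] [NormedSpace ℝ X] [CompleteSpace X]
    (hX : UnifSmooth X)
    (R : ℕ → ℝ) (hR1 : R 1 = 1)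
    (hRrec : ∀ j : ℕ, 1 ≤ j → 1 < R (j + 1) ∧
      R (j + 1) = R j * zetaSmooth X (1 / (R (j + 1) - 1)))
    (S : Set X) (hS : S ⊆ Metric.closedBall (0 : X) 1)
    (h0 : (0 : X) ∈ convexHull ℝ S) :
    ∃ x : ℕ → X, (∀ i : ℕ, x i ∈ S) ∧
      ∀ k : ℕ, 1 ≤ k → ‖∑ i ∈ Finset.range k, x i‖ ≤ R k := by
  have hne : S.Nonempty := convexHull_nonempty_iff.1 ⟨0, h0⟩
  have key : ∀ (k : ℕ) (s : X), ∃ x ∈ S,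
      ((k = 0 ∧ s = 0) ∨ (1 ≤ k ∧ ‖s‖ ≤ R k)) → ‖s + x‖ ≤ R (k + 1) := by
    intro k s
    by_cases h : (k = 0 ∧ s = 0) ∨ (1 ≤ k ∧ ‖s‖ ≤ R k)
    · rcases h with ⟨rfl, rfl⟩ | ⟨hk, hs⟩
      · obtain ⟨x, hx⟩ := hne
        refine ⟨x, hx, fun _ => ?_⟩
        have := hS hx
        simpa [hR1] using this
      · obtain ⟨x, hx, hx2⟩ := aux_step (R k) (R (k + 1)) (hRrec k hk).1 (hRrec k hk).2 S hS h0 s hs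
        exact ⟨x, hx, fun _ => hx2⟩
    · obtain ⟨x, hx⟩ := hne
      exact ⟨x, hx, fun h' => absurd h' h⟩
  choose g hgS hg using key
  let P : ℕ → X := fun n => Nat.rec 0 (fun k s => s + g k s) n
  have hP : ∀ k, ∑ i ∈ Finset.range k, g i (P i) = P k := by
    intro k
    induction k with
    | zero => rfl
    | succ k ih => rw [Finset.sum_range_succ, ih]
  have hPn : ∀ k, ‖P (k + 1)‖ ≤ R (k + 1) := by
    intro k
    induction k with
    | zero => exact hg 0 (P 0) (Or.inl ⟨rfl, rfl⟩)
    | succ k ih => exact hg (k + 1) (P (k + 1)) (Or.inr ⟨by omega, ih⟩)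
  refine ⟨fun i => g i (P i), fun i => hgS _ _, fun k hk => ?_⟩
  obtain ⟨j, rfl⟩ : ∃ j, k = j + 1 := ⟨k - 1, by omega⟩
  rw [hP]
  exact hPn j
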